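/- Let k ≥ 1 and let σ be a permutation of {1,…,k} with σ ≠ id. Then k − |I_ℓ*(σ)| ≤ 2·deg(σ), where I_ℓ*(σ) is the set of internal ladder indices of σ. -/

import Mathlib

/-!
Reading the graph of `σ̃` by values, a ladder index `i` sits next to `i - 1`. It is therefore
internal as soon as `i + 1` is a ladder index too, and also when `i = k`, because the non-valley
condition then puts `k` at position `k`, next to `k + 1`. So `i ↦ i + 1` injects the non-internal
ladder indices into the `deg σ` indices of `{1,…,k}` that are not ladder indices.
-/

/-- The extension `σ̃` of a permutation `σ` of `{1,…,k}` to `{0,1,…,k+1}`, with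
`σ̃(0) = 0` and `σ̃(k+1) = k+1`.  Here `σ : Equiv.Perm (Fin k)` acts on `{0,…,k-1}`,
shifted by one. -/
def sigmaTilde (k : ℕ) (σ : Equiv.Perm (Fin k)) (j : ℕ) : ℕ :=
  if h : 1 ≤ j ∧ j ≤ k then ((σ ⟨j - 1, by omega⟩ : Fin k) : ℕ) + 1 else j

/-- The point `(j, σ(j))` is a *peak*: `σ(j) < min {σ̃(j-1), σ̃(j+1)}`. -/
def IsPeakAt (k : ℕ) (σ : Equiv.Perm (Fin k)) (j : ℕ) : Prop :=
  sigmaTilde k σ j < min (sigmaTilde k σ (j - 1)) (sigmaTilde k σ (j + 1))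

/-- The point `(j, σ(j))` is a *valley*: `σ(j) > max {σ̃(j-1), σ̃(j+1)}`. -/
def IsValleyAt (k : ℕ) (σ : Equiv.Perm (Fin k)) (j : ℕ) : Prop :=
  max (sigmaTilde k σ (j - 1)) (sigmaTilde k σ (j + 1)) < sigmaTilde k σ j

/-- The point `(j, σ(j))` is a *ladder*: `σ(j) - 1 ∈ {σ̃(j-1), σ̃(j+1)}` and the point is
not a valley. -/
def IsLadderAt (k : ℕ) (σ : Equiv.Perm (Fin k)) (j : ℕ) : Prop :=
  (sigmaTilde k σ j - 1 = sigmaTilde k σ (j - 1) ∨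
    sigmaTilde k σ j - 1 = sigmaTilde k σ (j + 1)) ∧ ¬IsValleyAt k σ j

instance (k : ℕ) (σ : Equiv.Perm (Fin k)) (j : ℕ) : Decidable (IsPeakAt k σ j) := by
  unfold IsPeakAt; infer_instance

instance (k : ℕ) (σ : Equiv.Perm (Fin k)) (j : ℕ) : Decidable (IsValleyAt k σ j) := by
  unfold IsValleyAt; infer_instance

instance (k : ℕ) (σ : Equiv.Perm (Fin k)) (j : ℕ) : Decidable (IsLadderAt k σ j) := by
  unfold IsLadderAt; infer_instance

/-- `ℓ(σ)`: the number of `j ∈ {1,…,k}` such that `(j, σ(j))` is a ladder. -/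
def ladderCount (k : ℕ) (σ : Equiv.Perm (Fin k)) : ℕ :=
  ((Finset.Icc 1 k).filter fun j => IsLadderAt k σ j).card

/-- The degree of a permutation: `deg(σ) := k - ℓ(σ)`. -/
def permDegree (k : ℕ) (σ : Equiv.Perm (Fin k)) : ℕ := k - ladderCount k σ

/-- The set `I_ℓ` of ladder indices `i ∈ {1,…,k}` (as values: `(σ̃⁻¹(i), i)` is a ladder
point on the graph of `σ`). -/
def ladderSet (k : ℕ) (σ : Equiv.Perm (Fin k)) : Set ℕ :=
  {i | 1 ≤ i ∧ i ≤ k ∧ IsLadderAt k σ (sigmaTilde k σ⁻¹ i)}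

/-- The set `I_ℓ*` of *internal* ladder indices:
`i ∈ I_ℓ` with `|σ̃⁻¹(i-1) - σ̃⁻¹(i)| = 1` and `|σ̃⁻¹(i+1) - σ̃⁻¹(i)| = 1`. -/
def internalLadderSet (k : ℕ) (σ : Equiv.Perm (Fin k)) : Set ℕ :=
  {i | i ∈ ladderSet k σ ∧
    ((sigmaTilde k σ⁻¹ (i - 1) : ℤ) - (sigmaTilde k σ⁻¹ i : ℤ)).natAbs = 1 ∧
    ((sigmaTilde k σ⁻¹ (i + 1) : ℤ) - (sigmaTilde k σ⁻¹ i : ℤ)).natAbs = 1}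

section SigmaTilde

variable {k : ℕ} (σ τ : Equiv.Perm (Fin k)) (j : ℕ)

theorem sigmaTilde_of_notMem_Icc {j : ℕ} (hj : j ∉ Set.Icc 1 k) : sigmaTilde k σ j = j :=
  dif_neg hj

theorem sigmaTilde_mem_Icc_iff : sigmaTilde k σ j ∈ Set.Icc 1 k ↔ j ∈ Set.Icc 1 k := by
  rw [Set.mem_Icc, Set.mem_Icc, sigmaTilde]
  split_ifs <;> omega

theorem sigmaTilde_le_iff : sigmaTilde k σ j ≤ k ↔ j ≤ k := by
  rw [sigmaTilde]
  split_ifs <;> omega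

theorem sigmaTilde_one : sigmaTilde k 1 j = j := by
  by_cases hj : j ∈ Set.Icc 1 k
  · exact (dif_pos hj).trans (Nat.sub_add_cancel hj.1)
  · exact sigmaTilde_of_notMem_Icc 1 hj

theorem sigmaTilde_mul : sigmaTilde k (σ * τ) j = sigmaTilde k σ (sigmaTilde k τ j) := by
  by_cases hj : j ∈ Set.Icc 1 k
  · have hτj : 1 ≤ sigmaTilde k τ j ∧ sigmaTilde k τ j ≤ k := (sigmaTilde_mem_Icc_iff τ j).2 hj
    rw [sigmaTilde, dif_pos (Set.mem_Icc.1 hj), sigmaTilde, dif_pos hτj]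
    simp only [sigmaTilde, dif_pos (Set.mem_Icc.1 hj), Nat.add_sub_cancel, Fin.eta,
      Equiv.Perm.mul_apply]
  · rw [sigmaTilde_of_notMem_Icc _ hj, sigmaTilde_of_notMem_Icc τ hj, sigmaTilde_of_notMem_Icc σ hj]

theorem sigmaTilde_inv_sigmaTilde : sigmaTilde k σ⁻¹ (sigmaTilde k σ j) = j := by
  rw [← sigmaTilde_mul, inv_mul_cancel, sigmaTilde_one]

theorem sigmaTilde_sigmaTilde_inv : sigmaTilde k σ (sigmaTilde k σ⁻¹ j) = j := by
  rw [← sigmaTilde_mul, mul_inv_cancel, sigmaTilde_one]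

theorem sigmaTilde_injective : Function.Injective (sigmaTilde k σ) :=
  Function.LeftInverse.injective (sigmaTilde_inv_sigmaTilde σ)

end SigmaTilde

theorem ncard_Icc_one_sdiff {k : ℕ} {s : Set ℕ} (hs : s ⊆ Set.Icc 1 k) :
    (Set.Icc 1 k \ s).ncard = k - s.ncard := by
  rw [Set.ncard_sdiff hs ((Set.finite_Icc 1 k).subset hs), Set.ncard_Icc_nat, Nat.add_sub_cancel]

section Ladders

variable {k : ℕ} {σ : Equiv.Perm (Fin k)} {i : ℕ}

theorem ladderSet_subset_Icc : ladderSet k σ ⊆ Set.Icc 1 k :=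
  fun _ hi => ⟨hi.1, hi.2.1⟩

theorem internalLadderSet_subset_ladderSet : internalLadderSet k σ ⊆ ladderSet k σ :=
  fun _ hi => hi.1

theorem image_sigmaTilde_ladder_positions (k : ℕ) (σ : Equiv.Perm (Fin k)) :
    sigmaTilde k σ '' {j ∈ Set.Icc 1 k | IsLadderAt k σ j} = ladderSet k σ := by
  ext i
  constructor
  · rintro ⟨j, ⟨hj, hladder⟩, rfl⟩
    obtain ⟨hpos, hle⟩ := (sigmaTilde_mem_Icc_iff σ j).2 hj
    exact ⟨hpos, hle, (sigmaTilde_inv_sigmaTilde σ j).symm ▸ hladder⟩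
  · rintro ⟨hpos, hle, hladder⟩
    exact ⟨sigmaTilde k σ⁻¹ i, ⟨(sigmaTilde_mem_Icc_iff σ⁻¹ i).2 ⟨hpos, hle⟩, hladder⟩,
      sigmaTilde_sigmaTilde_inv σ i⟩

theorem ladderCount_eq_ncard_ladderSet (k : ℕ) (σ : Equiv.Perm (Fin k)) :
    ladderCount k σ = (ladderSet k σ).ncard := by
  rw [← image_sigmaTilde_ladder_positions, Set.ncard_image_of_injective _ (sigmaTilde_injective σ),
    ladderCount, ← Set.ncard_coe_finset, Finset.coe_filter]
  simp only [Finset.mem_Icc, Set.mem_Icc]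

theorem permDegree_eq_ncard_sdiff (k : ℕ) (σ : Equiv.Perm (Fin k)) :
    permDegree k σ = (Set.Icc 1 k \ ladderSet k σ).ncard := by
  rw [permDegree, ladderCount_eq_ncard_ladderSet, ncard_Icc_one_sdiff ladderSet_subset_Icc]

theorem natAbs_sigmaTilde_inv_pred_sub_eq_one (hi : i ∈ ladderSet k σ) :
    ((sigmaTilde k σ⁻¹ (i - 1) : ℤ) - (sigmaTilde k σ⁻¹ i : ℤ)).natAbs = 1 := by
  obtain ⟨hpos, -⟩ := (sigmaTilde_mem_Icc_iff σ⁻¹ i).2 (ladderSet_subset_Icc hi)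
  obtain ⟨-, -, hadj, -⟩ := hi
  rw [sigmaTilde_sigmaTilde_inv] at hadj
  rcases hadj with hleft | hright
  · rw [hleft, sigmaTilde_inv_sigmaTilde]
    omega
  · rw [hright, sigmaTilde_inv_sigmaTilde]
    omega

theorem mem_internalLadderSet_iff_natAbs_succ (hi : i ∈ ladderSet k σ) :
    i ∈ internalLadderSet k σ ↔
      ((sigmaTilde k σ⁻¹ (i + 1) : ℤ) - (sigmaTilde k σ⁻¹ i : ℤ)).natAbs = 1 :=
  ⟨fun h => h.2.2, fun h => ⟨hi, natAbs_sigmaTilde_inv_pred_sub_eq_one hi, h⟩⟩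

theorem mem_internalLadderSet_of_succ_mem (hi : i ∈ ladderSet k σ)
    (hsucc : i + 1 ∈ ladderSet k σ) : i ∈ internalLadderSet k σ := by
  rw [mem_internalLadderSet_iff_natAbs_succ hi, ← Int.natAbs_neg, neg_sub]
  exact natAbs_sigmaTilde_inv_pred_sub_eq_one hsucc

theorem sigmaTilde_inv_self_of_mem_ladderSet (hk : k ∈ ladderSet k σ) :
    sigmaTilde k σ⁻¹ k = k := by
  obtain ⟨hpos, hle⟩ := (sigmaTilde_mem_Icc_iff σ⁻¹ k).2 (ladderSet_subset_Icc hk)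
  obtain ⟨-, -, -, hvalley⟩ := hk
  rw [IsValleyAt, sigmaTilde_sigmaTilde_inv, max_lt_iff, not_and] at hvalley
  set p := sigmaTilde k σ⁻¹ k
  have lt_of_ne {q : ℕ} (hq : q ≤ k) (hqp : q ≠ p) : sigmaTilde k σ q < k := by
    refine lt_of_le_of_ne ((sigmaTilde_le_iff σ q).2 hq) fun heq => hqp ?_
    exact (sigmaTilde_inv_sigmaTilde σ q).symm.trans (congrArg (sigmaTilde k σ⁻¹) heq)
  by_contra hne
  exact hvalley (lt_of_ne (by omega) (by omega)) (lt_of_ne (by omega) (by omega))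

theorem self_mem_internalLadderSet (hk : k ∈ ladderSet k σ) : k ∈ internalLadderSet k σ := by
  rw [mem_internalLadderSet_iff_natAbs_succ hk, sigmaTilde_inv_self_of_mem_ladderSet hk,
    sigmaTilde_of_notMem_Icc σ⁻¹ fun h => Nat.not_succ_le_self k h.2]
  omega

theorem mapsTo_succ_nonInternalLadder (k : ℕ) (σ : Equiv.Perm (Fin k)) :
    Set.MapsTo Nat.succ (ladderSet k σ \ internalLadderSet k σ)
      (Set.Icc 1 k \ ladderSet k σ) := by
  rintro i ⟨hi, hnot⟩
  have hne : i ≠ k := by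
    rintro rfl
    exact hnot (self_mem_internalLadderSet hi)
  exact ⟨⟨i.succ_pos, lt_of_le_of_ne hi.2.1 hne⟩,
    fun hsucc => hnot (mem_internalLadderSet_of_succ_mem hi hsucc)⟩

theorem ncard_nonInternalLadder_le_permDegree (k : ℕ) (σ : Equiv.Perm (Fin k)) :
    (ladderSet k σ \ internalLadderSet k σ).ncard ≤ permDegree k σ := by
  rw [permDegree_eq_ncard_sdiff]
  exact Set.ncard_le_ncard_of_injOn Nat.succ (mapsTo_succ_nonInternalLadder k σ)
    Nat.succ_injective.injOn ((Set.finite_Icc 1 k).sdiff)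

end Ladders

/-- Inequality (8.3) in the proof of the paper's Lemma 8.2: for any permutation
`σ ≠ id` of `{1,…,k}`, one has `k - |I_ℓ*(σ)| ≤ 2 deg(σ)`. -/
theorem card_nonInternalLadder_le_two_deg
    (k : ℕ) (hk : 1 ≤ k) (σ : Equiv.Perm (Fin k)) (hσ : σ ≠ 1) :
    k - (internalLadderSet k σ).ncard ≤ 2 * permDegree k σ := by
  calc k - (internalLadderSet k σ).ncard
      = (Set.Icc 1 k \ internalLadderSet k σ).ncard :=
        (ncard_Icc_one_sdiff
          (internalLadderSet_subset_ladderSet.trans ladderSet_subset_Icc)).symm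
    _ = ((Set.Icc 1 k \ ladderSet k σ) ∪ (ladderSet k σ \ internalLadderSet k σ)).ncard := by
        rw [Set.sdiff_union_sdiff_cancel ladderSet_subset_Icc internalLadderSet_subset_ladderSet]
    _ ≤ (Set.Icc 1 k \ ladderSet k σ).ncard + (ladderSet k σ \ internalLadderSet k σ).ncard :=
        Set.ncard_union_le _ _
    _ ≤ permDegree k σ + permDegree k σ :=
        add_le_add (permDegree_eq_ncard_sdiff k σ).ge (ncard_nonInternalLadder_le_permDegree k σ)
    _ = 2 * permDegree k σ := (two_mul _).symm
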